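/- arXiv:1312.2370 — 3 statements merged into one kernel-verified Lean document; each statement's English description precedes it below -/
import Mathlib

section
/- Let c > 0 and K ∈ ℝ. The difference equation n = c·x_n (x_{n+1} + x_n + x_{n-1}) + K·x_n for all n ≥ 1, with initial value x_0 = 0, has exactly one solution (x_n)_{n≥1} with x_n > 0 for all n ≥ 1, and this solution satisfies x_1 = (∫_ℝ x² exp(−(c/4)x⁴ − (K/2)x²) dx) / (∫_ℝ exp(−(c/4)x⁴ − (K/2)x²) dx). -/
open MeasureTheory

/-!
A sequence `x` with `x 0 = 0` corresponds to a functional `L` on polynomials for which the monic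
`Pₙ` with `X * Pₙ = Pₙ₊₁ + xₙ Pₙ₋₁` are orthogonal. Testing the Pearson equation
`L p' = L ((c X³ + K X) p)` on `p = Pₙ Pₙ₊₁` gives exactly the difference equation.

For `L p = ∫ p w` with `w t = exp (-(c/4) t⁴ - (K/2) t²)` the Pearson equation is integration by
parts, so the recurrence coefficients of `w` form a positive solution. Conversely, a positive
solution yields, by Favard's theorem, a functional `L` that is nonnegative on squares and satisfies
the Pearson equation. The latter is a second-order recurrence for the even moments of `L`, whose
solutions are spanned by the even moments of `w` over the real axis and those over the imaginary
axis, where `t ↦ i t` replaces `K` by `-K`. Take the squares `t²ᵉ Tₙ(-s t²)²` with `Tₙ` the Taylor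
polynomials of `exp`. As `n → ∞` the real part tends to `∫ t²ᵉ w(t) exp (-2 s t²)`, which stays
bounded as `s → ∞`, whereas the imaginary part acquires the growing factor `exp (2 s t²)` and the
sign `(-1)ᵉ`. Nonnegativity for `e = 0` and `e = 1` leaves only the real part, and so determines
`x 1 = L (X²) / L 1`. The difference equation then determines the remaining terms.
-/

open Filter Polynomial Topology

/-! ### Polynomials defined by a three-term recurrence -/

section ThreeTerm

variable {R : Type*} [CommRing R] {x : ℕ → R}

/-- The monic polynomials with `X * Pₙ = Pₙ₊₁ + xₙ Pₙ₋₁`, the candidates for the orthogonal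
polynomials of an even weight. -/
noncomputable def threeTermPoly (x : ℕ → R) : ℕ → R[X]
  | 0 => 1
  | 1 => X
  | n + 2 => X * threeTermPoly x (n + 1) - C (x (n + 1)) * threeTermPoly x n

lemma X_mul_threeTermPoly_succ (x : ℕ → R) (n : ℕ) :
    X * threeTermPoly x (n + 1) = threeTermPoly x (n + 2) + C (x (n + 1)) * threeTermPoly x n := by
  rw [threeTermPoly, sub_add_cancel]

lemma X_mul_threeTermPoly (hx : x 0 = 0) (n : ℕ) :
    X * threeTermPoly x n = threeTermPoly x (n + 1) + C (x n) * threeTermPoly x (n - 1) := by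
  cases n with
  | zero => simp [threeTermPoly, hx]
  | succ n => exact X_mul_threeTermPoly_succ x n

lemma monic_and_natDegree_threeTermPoly [Nontrivial R] (x : ℕ → R) (n : ℕ) :
    (threeTermPoly x n).Monic ∧ (threeTermPoly x n).natDegree = n := by
  induction n using Nat.twoStepInduction with
  | zero => simp [threeTermPoly]
  | one => simp [threeTermPoly, monic_X]
  | more n ih₀ ih₁ =>
    have hlead : (X * threeTermPoly x (n + 1)).natDegree = n + 2 := by
      rw [monic_X.natDegree_mul ih₁.1, natDegree_X, ih₁.2, add_comm]
    have hlt : (C (x (n + 1)) * threeTermPoly x n).natDegree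
        < (X * threeTermPoly x (n + 1)).natDegree := by
      have := natDegree_C_mul_le (x (n + 1)) (threeTermPoly x n)
      omega
    rw [threeTermPoly]
    exact ⟨(monic_X.mul ih₁.1).sub_of_left (degree_lt_degree hlt),
      (natDegree_sub_eq_left_of_natDegree_lt hlt).trans hlead⟩

lemma monic_threeTermPoly (x : ℕ → R) (n : ℕ) : (threeTermPoly x n).Monic := by
  nontriviality R
  exact (monic_and_natDegree_threeTermPoly x n).1

lemma natDegree_threeTermPoly [Nontrivial R] (x : ℕ → R) (n : ℕ) :
    (threeTermPoly x n).natDegree = n :=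
  (monic_and_natDegree_threeTermPoly x n).2

lemma natDegree_threeTermPoly_le (x : ℕ → R) (n : ℕ) : (threeTermPoly x n).natDegree ≤ n := by
  nontriviality R
  exact (natDegree_threeTermPoly x n).le

lemma coeff_threeTermPoly_self (x : ℕ → R) (n : ℕ) : (threeTermPoly x n).coeff n = 1 := by
  nontriviality R
  simpa only [natDegree_threeTermPoly] using (monic_threeTermPoly x n).coeff_natDegree

lemma threeTermPoly_comp_neg_X (x : ℕ → R) (n : ℕ) :
    (threeTermPoly x n).comp (-X) = (-1) ^ n * threeTermPoly x n := by
  induction n using Nat.twoStepInduction with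
  | zero => simp [threeTermPoly]
  | one => simp [threeTermPoly]
  | more n ih₀ ih₁ =>
    simp only [threeTermPoly, sub_comp, mul_comp, X_comp, C_comp, ih₀, ih₁]
    ring

lemma linearMap_ext_of_monic {M : Type*} [AddCommGroup M] [Module R M] {f g : R[X] →ₗ[R] M}
    {S : ℕ → R[X]} (hmonic : ∀ n, (S n).Monic)
    (hdeg : ∀ n, (S n).natDegree = n) (h : ∀ n, f (S n) = g (S n)) : f = g := by
  nontriviality R
  let T : Polynomial.Sequence R :=
    ⟨S, fun n => by rw [degree_eq_natDegree (hmonic n).ne_zero, hdeg]⟩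
  have hspan := T.span fun n => by
    change IsUnit (S n).leadingCoeff
    simp [(hmonic n).leadingCoeff]
  exact LinearMap.ext_on hspan (Set.forall_mem_range.2 h)

end ThreeTerm

/-! ### Orthogonality -/

section Orthogonal

variable {R : Type*} [CommRing R] {L : R[X] →ₗ[R] R} {x : ℕ → R}

/-- Orthogonality of a sequence of polynomials, with `P n` of degree `n`, for the bilinear form
`(p, q) ↦ L (p * q)`. It is tested on monomials, which span the polynomials of lower degree. -/
def IsOrthogonalSeq (L : R[X] →ₗ[R] R) (P : ℕ → R[X]) : Prop :=
  ∀ ⦃k n : ℕ⦄, k < n → L (X ^ k * P n) = 0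

/-- The functional `L` is symmetric: it vanishes on odd polynomials. -/
def VanishesOnOdd (L : R[X] →ₗ[R] R) : Prop :=
  ∀ p : R[X], p.comp (-X) = -p → L p = 0

lemma apply_C_mul (L : R[X] →ₗ[R] R) (a : R) (p : R[X]) : L (C a * p) = a * L p := by
  rw [← smul_eq_C_mul, map_smul, smul_eq_mul]

lemma apply_mul_of_natDegree_le {p q : R[X]} {n : ℕ} (hq : ∀ k < n, L (X ^ k * q) = 0)
    (hp : p.natDegree ≤ n) : L (p * q) = p.coeff n * L (X ^ n * q) := by
  conv_lhs => rw [p.as_sum_range_C_mul_X_pow' (Nat.lt_succ_of_le hp)]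
  simp only [Finset.sum_mul, map_sum, mul_assoc, apply_C_mul]
  rw [Finset.sum_range_succ, Finset.sum_eq_zero, zero_add]
  intro k hk
  rw [hq k (Finset.mem_range.1 hk), mul_zero]

lemma IsOrthogonalSeq.apply_X_pow_succ (h : IsOrthogonalSeq L (threeTermPoly x)) (n : ℕ) :
    L (X ^ (n + 1) * threeTermPoly x (n + 1)) = x (n + 1) * L (X ^ n * threeTermPoly x n) := by
  rw [pow_succ, mul_assoc, X_mul_threeTermPoly_succ, mul_add, map_add, h (by omega), zero_add,
    mul_left_comm, apply_C_mul]

lemma IsOrthogonalSeq.apply_X_pow (h : IsOrthogonalSeq L (threeTermPoly x)) (n : ℕ) :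
    L (X ^ n * threeTermPoly x n) = (∏ i ∈ Finset.range n, x (i + 1)) * L 1 := by
  induction n with
  | zero => simp [threeTermPoly]
  | succ n ih => rw [h.apply_X_pow_succ, ih, Finset.prod_range_succ]; ring

lemma IsOrthogonalSeq.apply_mul (h : IsOrthogonalSeq L (threeTermPoly x)) {p : R[X]} {n : ℕ}
    (hp : p.natDegree ≤ n) :
    L (p * threeTermPoly x n) = p.coeff n * L (X ^ n * threeTermPoly x n) :=
  apply_mul_of_natDegree_le (fun _ hk => h hk) hp

lemma IsOrthogonalSeq.apply_mul_of_lt (h : IsOrthogonalSeq L (threeTermPoly x)) {p : R[X]} {n : ℕ}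
    (hp : p.natDegree < n) : L (p * threeTermPoly x n) = 0 := by
  rw [h.apply_mul hp.le, coeff_eq_zero_of_natDegree_lt hp, zero_mul]

lemma IsOrthogonalSeq.apply_mul_self (h : IsOrthogonalSeq L (threeTermPoly x)) (n : ℕ) :
    L (threeTermPoly x n * threeTermPoly x n) = L (X ^ n * threeTermPoly x n) := by
  rw [h.apply_mul (natDegree_threeTermPoly_le x n), coeff_threeTermPoly_self, one_mul]

lemma IsOrthogonalSeq.apply_mul_of_ne (h : IsOrthogonalSeq L (threeTermPoly x)) {m n : ℕ}
    (hmn : m ≠ n) : L (threeTermPoly x m * threeTermPoly x n) = 0 := by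
  rcases hmn.lt_or_gt with hlt | hlt
  · exact h.apply_mul_of_lt ((natDegree_threeTermPoly_le x m).trans_lt hlt)
  · rw [mul_comm]
    exact h.apply_mul_of_lt ((natDegree_threeTermPoly_le x n).trans_lt hlt)

end Orthogonal

/-! ### The Pearson equation and the difference equation -/

section Pearson

variable {R : Type*} [CommRing R] {L : R[X] →ₗ[R] R} {c K : R} {x : ℕ → R}

/-- The difference equation, over an arbitrary ring and without the initial value `x 0 = 0`. -/
def SolvesFreud (c K : R) (x : ℕ → R) : Prop :=
  ∀ n : ℕ, 1 ≤ n → (n : R) = c * (x n * (x (n + 1) + x n + x (n - 1))) + K * x n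

lemma solvesFreud_iff_succ : SolvesFreud c K x ↔ ∀ n : ℕ,
    (n + 1 : R) = c * (x (n + 1) * (x (n + 2) + x (n + 1) + x n)) + K * x (n + 1) := by
  refine ⟨fun h n => by simpa using h (n + 1) (by omega), fun h n hn => ?_⟩
  obtain ⟨n, rfl⟩ := Nat.exists_eq_add_of_le' hn
  simpa using h n

lemma SolvesFreud.ext [IsDomain R] {y : ℕ → R} (hc : c ≠ 0)
    (hx : SolvesFreud c K x) (hy : SolvesFreud c K y) (hne : ∀ n : ℕ, 1 ≤ n → x n ≠ 0)
    (h₀ : x 0 = y 0) (h₁ : x 1 = y 1) : x = y := by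
  funext n
  induction n using Nat.twoStepInduction with
  | zero => exact h₀
  | one => exact h₁
  | more n ih₀ ih₁ =>
    refine mul_left_cancel₀ (mul_ne_zero hc (hne (n + 1) (by omega))) ?_
    have hxn := solvesFreud_iff_succ.1 hx n
    have hyn := solvesFreud_iff_succ.1 hy n
    rw [← ih₀, ← ih₁] at hyn
    linear_combination hyn - hxn

/-- The Pearson equation `L p' = L (V p)` with `V = c X³ + K X`. For `L p = ∫ p e⁻ᵁ` with `U' = V`
it is integration by parts. -/
def SatisfiesPearson (c K : R) (L : R[X] →ₗ[R] R) : Prop :=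
  ∀ p : R[X], L (derivative p) = L ((C c * X ^ 3 + C K * X) * p)

lemma IsOrthogonalSeq.apply_X_mul (h : IsOrthogonalSeq L (threeTermPoly x)) (n : ℕ) :
    L (X * (threeTermPoly x n * threeTermPoly x (n + 1)))
      = x (n + 1) * L (X ^ n * threeTermPoly x n) := by
  rw [mul_left_comm, X_mul_threeTermPoly_succ, mul_add, map_add, h.apply_mul_of_ne (by omega),
    zero_add, mul_left_comm, apply_C_mul, h.apply_mul_self]

lemma IsOrthogonalSeq.apply_X_pow_three_mul (h : IsOrthogonalSeq L (threeTermPoly x))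
    (hx : x 0 = 0) (n : ℕ) :
    L (X ^ 3 * (threeTermPoly x n * threeTermPoly x (n + 1)))
      = x (n + 1) * (x (n + 2) + x (n + 1) + x n) * L (X ^ n * threeTermPoly x n) := by
  set P := threeTermPoly x
  have hexpand : X ^ 3 * (P n * P (n + 1))
      = X * (P (n + 1) * P (n + 2)) + C (x (n + 1)) * (X * (P n * P (n + 1)))
        + C (x n) * (X * P (n - 1) * P (n + 2))
        + C (x (n + 1)) * (C (x n) * (X * (P (n - 1) * P n))) := by
    calc X ^ 3 * (P n * P (n + 1)) = X * ((X * P n) * (X * P (n + 1))) := by ring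
      _ = _ := by rw [X_mul_threeTermPoly hx, X_mul_threeTermPoly_succ]; ring
  have hfar : L (X * P (n - 1) * P (n + 2)) = 0 :=
    h.apply_mul_of_lt <| natDegree_mul_le.trans_lt <| by
      have : (P (n - 1)).natDegree ≤ n - 1 := natDegree_threeTermPoly_le x (n - 1)
      have := natDegree_X_le (R := R)
      omega
  have hprev : x n * L (X * (P (n - 1) * P n)) = x n * L (X ^ n * P n) := by
    cases n with
    | zero => simp [hx]
    | succ n => rw [Nat.add_sub_cancel, h.apply_X_mul, h.apply_X_pow_succ]
  simp only [hexpand, map_add, apply_C_mul, hfar, hprev]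
  rw [h.apply_X_mul, h.apply_X_mul, h.apply_X_pow_succ]
  ring

lemma IsOrthogonalSeq.apply_derivative_mul (h : IsOrthogonalSeq L (threeTermPoly x)) (n : ℕ) :
    L (derivative (threeTermPoly x n * threeTermPoly x (n + 1)))
      = (n + 1) * L (X ^ n * threeTermPoly x n) := by
  have hdeg (m : ℕ) : (derivative (threeTermPoly x m)).natDegree ≤ m - 1 :=
    (natDegree_derivative_le _).trans <| Nat.sub_le_sub_right (natDegree_threeTermPoly_le x m) 1
  rw [derivative_mul, map_add, h.apply_mul_of_lt ((hdeg n).trans_lt (by omega)), zero_add, mul_comm,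
    h.apply_mul (n := n) (hdeg (n + 1)), coeff_derivative,
    coeff_threeTermPoly_self, one_mul]

lemma VanishesOnOdd.pearson_of_even (h : VanishesOnOdd L) {p : R[X]} (hp : p.comp (-X) = p) :
    L (derivative p) = L ((C c * X ^ 3 + C K * X) * p) := by
  have hderiv : (derivative p).comp (-X) = -derivative p := by
    have := congrArg derivative hp
    rw [derivative_comp] at this
    simpa [neg_eq_iff_eq_neg] using this
  rw [h _ hderiv, h]
  simp only [mul_comp, add_comp, C_comp, X_comp, pow_comp, hp]
  ring

lemma IsOrthogonalSeq.apply_potential_mul (h : IsOrthogonalSeq L (threeTermPoly x))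
    (hx : x 0 = 0) (n : ℕ) :
    L ((C c * X ^ 3 + C K * X) * (threeTermPoly x n * threeTermPoly x (n + 1)))
      = (c * (x (n + 1) * (x (n + 2) + x (n + 1) + x n)) + K * x (n + 1))
        * L (X ^ n * threeTermPoly x n) := by
  rw [add_mul, map_add, mul_assoc, mul_assoc, apply_C_mul, apply_C_mul,
    h.apply_X_pow_three_mul hx, h.apply_X_mul]
  ring

theorem IsOrthogonalSeq.solvesFreud [NoZeroDivisors R] (h : IsOrthogonalSeq L (threeTermPoly x))
    (hx : x 0 = 0) (hne : ∀ n, L (X ^ n * threeTermPoly x n) ≠ 0) (hL : SatisfiesPearson c K L) :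
    SolvesFreud c K x := by
  refine solvesFreud_iff_succ.2 fun n => mul_right_cancel₀ (hne n) ?_
  rw [← h.apply_derivative_mul, hL, h.apply_potential_mul hx]

-- Every second polynomial of the basis `P₀ P₀, P₀ P₁, P₁ P₁, P₁ P₂, …` is even, and for even
-- polynomials both sides of the Pearson equation vanish.
lemma VanishesOnOdd.satisfiesPearson_of_consecutive (hodd : VanishesOnOdd L)
    (h : ∀ n, L (derivative (threeTermPoly x n * threeTermPoly x (n + 1)))
      = L ((C c * X ^ 3 + C K * X) * (threeTermPoly x n * threeTermPoly x (n + 1)))) :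
    SatisfiesPearson c K L := by
  intro p
  nontriviality R
  have hmonic := monic_threeTermPoly x
  suffices heq : L ∘ₗ derivative = L ∘ₗ LinearMap.mulLeft R (C c * X ^ 3 + C K * X) from
    LinearMap.congr_fun heq p
  refine linearMap_ext_of_monic
    (S := fun n => threeTermPoly x (n / 2) * threeTermPoly x ((n + 1) / 2))
    (fun n => (hmonic _).mul (hmonic _)) (fun n => ?_) (fun n => ?_)
  · rw [(hmonic _).natDegree_mul (hmonic _), natDegree_threeTermPoly, natDegree_threeTermPoly]
    omega
  · obtain ⟨m, rfl | rfl⟩ := n.even_or_odd'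
    · rw [show (2 * m + 1) / 2 = m by omega, show 2 * m / 2 = m by omega]
      refine hodd.pearson_of_even ?_
      rw [mul_comp, threeTermPoly_comp_neg_X, mul_mul_mul_comm, ← mul_pow]
      simp
    · rw [show (2 * m + 1 + 1) / 2 = m + 1 by omega, show (2 * m + 1) / 2 = m by omega]
      exact h m

theorem IsOrthogonalSeq.satisfiesPearson (h : IsOrthogonalSeq L (threeTermPoly x))
    (hodd : VanishesOnOdd L) (hx : x 0 = 0) (hsol : SolvesFreud c K x) :
    SatisfiesPearson c K L :=
  hodd.satisfiesPearson_of_consecutive fun n => by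
    rw [h.apply_derivative_mul, h.apply_potential_mul hx, ← solvesFreud_iff_succ.1 hsol n]

end Pearson

/-! ### Favard's theorem -/

section Favard

variable {R : Type*} [CommRing R] {L : R[X] →ₗ[R] R} {x : ℕ → R}

lemma isOrthogonalSeq_of_apply_succ_eq_zero
    (h : ∀ n, L (threeTermPoly x (n + 1)) = 0) : IsOrthogonalSeq L (threeTermPoly x) := by
  intro k
  induction k with
  | zero =>
    intro n hn
    obtain ⟨n, rfl⟩ := Nat.exists_eq_add_of_le' hn
    simpa using h n
  | succ k ih =>
    intro n hn
    obtain ⟨n, rfl⟩ := Nat.exists_eq_add_of_le' (Nat.one_le_of_lt hn)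
    rw [pow_succ, mul_assoc, X_mul_threeTermPoly_succ, mul_add, map_add, mul_left_comm, apply_C_mul,
      ih (by omega), ih (by omega), mul_zero, add_zero]

theorem exists_isOrthogonalSeq_threeTermPoly [IsDomain R] (x : ℕ → R) :
    ∃ L : R[X] →ₗ[R] R, L 1 = 1 ∧ IsOrthogonalSeq L (threeTermPoly x) := by
  let S : Polynomial.Sequence R := ⟨threeTermPoly x, fun n => by
    rw [degree_eq_natDegree (monic_threeTermPoly x n).ne_zero, natDegree_threeTermPoly]⟩
  have hunit (n : ℕ) : IsUnit (S n).leadingCoeff := by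
    rw [show S n = threeTermPoly x n from rfl, (monic_threeTermPoly x n).leadingCoeff]
    exact isUnit_one
  have hcoord (n : ℕ) : (S.basis hunit).coord 0 (threeTermPoly x n) = if n = 0 then 1 else 0 := by
    rw [show threeTermPoly x n = S.basis hunit n from (S.basis_eq_self hunit n).symm,
      Module.Basis.coord_apply, Module.Basis.repr_self, Finsupp.single_apply]
  exact ⟨(S.basis hunit).coord 0, by simpa [threeTermPoly] using hcoord 0,
    isOrthogonalSeq_of_apply_succ_eq_zero fun n => by simpa using hcoord (n + 1)⟩

lemma IsOrthogonalSeq.vanishesOnOdd [NoZeroDivisors R] [CharZero R]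
    (h : IsOrthogonalSeq L (threeTermPoly x)) : VanishesOnOdd L := by
  nontriviality R
  have hzero (n : ℕ) (hn : n ≠ 0) : L (threeTermPoly x n) = 0 := by
    simpa using h (Nat.pos_of_ne_zero hn)
  have hreflect : L ∘ₗ (aeval (-X : R[X])).toLinearMap = L := by
    refine linearMap_ext_of_monic (monic_threeTermPoly x) (natDegree_threeTermPoly x) fun n => ?_
    change L ((threeTermPoly x n).comp (-X)) = _
    rcases eq_or_ne n 0 with rfl | hn
    · simp [threeTermPoly]
    · rw [threeTermPoly_comp_neg_X, ← C_1, ← C_neg, ← C_pow, apply_C_mul, hzero n hn, mul_zero]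
  intro p hp
  have hself : L (p.comp (-X)) = L p := LinearMap.congr_fun hreflect p
  rwa [hp, map_neg, neg_eq_self] at hself

lemma IsOrthogonalSeq.apply_mul_self_nonneg [LinearOrder R] [IsStrictOrderedRing R]
    (h : IsOrthogonalSeq L (threeTermPoly x)) (hnonneg : ∀ n, 0 ≤ L (X ^ n * threeTermPoly x n))
    (p : R[X]) : 0 ≤ L (p * p) := by
  suffices hdeg : ∀ (n : ℕ) (p : R[X]), p.degree < n → 0 ≤ L (p * p) from
    hdeg (p.natDegree + 1) p (degree_le_natDegree.trans_lt (by exact_mod_cast Nat.lt_succ_self _))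
  intro n
  induction n with
  | zero =>
    intro p hp
    have : p = 0 := by simpa [degree_lt_iff_coeff_zero, Polynomial.ext_iff] using hp
    simp [this]
  | succ n ih =>
    intro p hp
    set a := p.coeff n
    obtain ⟨q, hpq⟩ : ∃ q, p = C a * threeTermPoly x n + q := ⟨_, (add_sub_cancel _ _).symm⟩
    have hq : q.degree < n := by
      rw [degree_lt_iff_coeff_zero] at hp ⊢
      intro m hm
      rw [eq_sub_of_add_eq' hpq.symm, coeff_sub, coeff_C_mul]
      rcases hm.eq_or_lt with rfl | hlt
      · rw [coeff_threeTermPoly_self, mul_one, sub_self]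
      · rw [hp m hlt, coeff_eq_zero_of_natDegree_lt ((natDegree_threeTermPoly_le x n).trans_lt hlt),
          mul_zero, sub_zero]
    have hcross : L (q * threeTermPoly x n) = 0 := by
      rw [h.apply_mul (natDegree_le_of_degree_le hq.le),
        (degree_lt_iff_coeff_zero _ _).1 hq n le_rfl, zero_mul]
    have hsq : L (p * p) = a ^ 2 * L (X ^ n * threeTermPoly x n) + L (q * q) := by
      have : p * p = C (a ^ 2) * (threeTermPoly x n * threeTermPoly x n)
          + C (2 * a) * (q * threeTermPoly x n) + q * q := by
        rw [hpq]; simp only [map_mul, map_pow, map_ofNat]; ring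
      rw [this, map_add, map_add, apply_C_mul, apply_C_mul, hcross, h.apply_mul_self, mul_zero,
        add_zero]
    rw [hsq]
    exact add_nonneg (mul_nonneg (sq_nonneg a) (hnonneg n)) (ih q hq)

theorem exists_satisfiesPearson_of_solvesFreud [LinearOrder R] [IsStrictOrderedRing R]
    {c K : R} (hx : x 0 = 0) (hsol : SolvesFreud c K x) (hpos : ∀ n : ℕ, 1 ≤ n → 0 < x n) :
    ∃ L : R[X] →ₗ[R] R, L 1 = 1 ∧ L (X ^ 2) = x 1 ∧ (∀ p, 0 ≤ L (p * p)) ∧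
      SatisfiesPearson c K L := by
  obtain ⟨L, hL, h⟩ := exists_isOrthogonalSeq_threeTermPoly x
  refine ⟨L, hL, ?_, h.apply_mul_self_nonneg fun n => ?_,
    h.satisfiesPearson h.vanishesOnOdd hx hsol⟩
  · simpa [threeTermPoly, hL, sq] using h.apply_X_pow 1
  · rw [h.apply_X_pow, hL, mul_one]
    exact Finset.prod_nonneg fun i _ => (hpos _ (by omega)).le

end Favard

/-! ### The recurrence coefficients of a functional -/

section OrthoPoly

variable {F : Type*} [Field F] {L : F[X] →ₗ[F] F}

/-- The monic orthogonal polynomials of a symmetric functional `L`, built by the recurrence that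
orthogonality forces. They are orthogonal only where no division by zero occurs, see
`isOrthogonalSeq_threeTermPoly_recurrenceCoeff`. -/
noncomputable def orthoPoly (L : F[X] →ₗ[F] F) : ℕ → F[X]
  | 0 => 1
  | 1 => X
  | n + 2 => X * orthoPoly L (n + 1)
      - C (L (X ^ (n + 1) * orthoPoly L (n + 1)) / L (X ^ n * orthoPoly L n)) * orthoPoly L n

/-- The coefficients in the three-term recurrence of `orthoPoly L`. -/
noncomputable def recurrenceCoeff (L : F[X] →ₗ[F] F) : ℕ → F
  | 0 => 0
  | n + 1 => L (X ^ (n + 1) * orthoPoly L (n + 1)) / L (X ^ n * orthoPoly L n)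

lemma threeTermPoly_recurrenceCoeff (L : F[X] →ₗ[F] F) (n : ℕ) :
    threeTermPoly (recurrenceCoeff L) n = orthoPoly L n := by
  induction n using Nat.twoStepInduction with
  | zero => rfl
  | one => rfl
  | more n ih₀ ih₁ => rw [threeTermPoly, orthoPoly, ih₀, ih₁, recurrenceCoeff]

lemma recurrenceCoeff_succ (L : F[X] →ₗ[F] F) (n : ℕ) :
    recurrenceCoeff L (n + 1) = L (X ^ (n + 1) * threeTermPoly (recurrenceCoeff L) (n + 1))
      / L (X ^ n * threeTermPoly (recurrenceCoeff L) n) := by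
  rw [recurrenceCoeff, threeTermPoly_recurrenceCoeff, threeTermPoly_recurrenceCoeff]

theorem isOrthogonalSeq_threeTermPoly_recurrenceCoeff (hodd : VanishesOnOdd L)
    (hdef : ∀ p ≠ 0, L (p * p) ≠ 0) : IsOrthogonalSeq L (threeTermPoly (recurrenceCoeff L)) := by
  set x := recurrenceCoeff L with hx
  have hparity (k n : ℕ) (hkn : Odd (k + n)) : L (X ^ k * threeTermPoly x n) = 0 := by
    refine hodd _ ?_
    rw [mul_comp, pow_comp, X_comp, threeTermPoly_comp_neg_X, neg_pow, mul_mul_mul_comm, ← pow_add,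
      hkn.neg_one_pow, neg_one_mul]
  suffices h : ∀ n, ∀ k < n, L (X ^ k * threeTermPoly x n) = 0 from fun k n hkn => h n k hkn
  intro n
  induction n using Nat.twoStepInduction with
  | zero => intro k hk; omega
  | one => exact fun k hk => hparity k 1 (by simp [Nat.lt_one_iff.1 hk])
  | more n ih₀ ih₁ =>
    intro k hk
    have hne : L (X ^ n * threeTermPoly x n) ≠ 0 := by
      have := apply_mul_of_natDegree_le ih₀ (natDegree_threeTermPoly_le x n)
      rw [coeff_threeTermPoly_self, one_mul] at this
      exact this ▸ hdef _ (monic_threeTermPoly x n).ne_zero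
    have hrec : L (X ^ k * threeTermPoly x (n + 2)) = L (X ^ (k + 1) * threeTermPoly x (n + 1))
        - x (n + 1) * L (X ^ k * threeTermPoly x n) := by
      rw [threeTermPoly, mul_sub, map_sub, ← mul_assoc, ← pow_succ, mul_left_comm, apply_C_mul]
    rcases lt_trichotomy k n with hlt | rfl | hgt
    · rw [hrec, ih₁ _ (by omega), ih₀ _ hlt, mul_zero, sub_zero]
    · rw [hrec, hx, recurrenceCoeff_succ, ← hx, div_mul_cancel₀ _ hne, sub_self]
    · obtain rfl : k = n + 1 := by omega
      exact hparity _ _ ⟨n + 1, by ring⟩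

theorem exists_pos_solvesFreud [LinearOrder F] [IsStrictOrderedRing F] {c K : F}
    (hodd : VanishesOnOdd L)
    (hpos : ∀ p ≠ 0, 0 < L (p * p)) (hL : SatisfiesPearson c K L) :
    ∃ x : ℕ → F, x 0 = 0 ∧ SolvesFreud c K x ∧ ∀ n : ℕ, 1 ≤ n → 0 < x n := by
  have h := isOrthogonalSeq_threeTermPoly_recurrenceCoeff hodd fun p hp => (hpos p hp).ne'
  have hnorm (n : ℕ) : 0 < L (X ^ n * threeTermPoly (recurrenceCoeff L) n) := by
    rw [← h.apply_mul_self]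
    exact hpos _ (monic_threeTermPoly _ n).ne_zero
  refine ⟨recurrenceCoeff L, rfl, h.solvesFreud rfl (fun n => (hnorm n).ne') hL, fun n hn => ?_⟩
  obtain ⟨n, rfl⟩ := Nat.exists_eq_add_of_le' hn
  rw [recurrenceCoeff_succ]
  exact div_pos (hnorm _) (hnorm _)

end OrthoPoly

/-! ### The moment recurrence -/

section MomentRecurrence

variable {R : Type*} [CommRing R] {c K : R} {u v : ℕ → R}

/-- The recurrence that the Pearson equation imposes on the even moments `u k = L (X ^ (2 * k))`. -/
def SolvesMomentRecurrence (c K : R) (u : ℕ → R) : Prop :=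
  ∀ k : ℕ, c * u (k + 2) + K * u (k + 1) = (2 * k + 1) * u k

lemma SatisfiesPearson.solvesMomentRecurrence {L : R[X] →ₗ[R] R} (h : SatisfiesPearson c K L) :
    SolvesMomentRecurrence c K fun k => L (X ^ (2 * k)) := by
  intro k
  have hp := h (X ^ (2 * k + 1))
  have hV : (C c * X ^ 3 + C K * X) * X ^ (2 * k + 1)
      = C c * X ^ (2 * (k + 2)) + C K * X ^ (2 * (k + 1)) := by ring
  rw [derivative_X_pow, hV, map_add, apply_C_mul, apply_C_mul, apply_C_mul] at hp
  simpa using hp.symm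

lemma SolvesMomentRecurrence.neg_one_pow_mul (h : SolvesMomentRecurrence c (-K) u) :
    SolvesMomentRecurrence c K fun k => (-1) ^ k * u k := by
  intro k
  linear_combination (-1) ^ k * h k

lemma SolvesMomentRecurrence.ext [IsDomain R] (hc : c ≠ 0) (hu : SolvesMomentRecurrence c K u)
    (hv : SolvesMomentRecurrence c K v) (h₀ : u 0 = v 0) (h₁ : u 1 = v 1) : u = v := by
  funext k
  induction k using Nat.twoStepInduction with
  | zero => exact h₀
  | one => exact h₁
  | more k ih₀ ih₁ =>
    refine mul_left_cancel₀ hc ?_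
    linear_combination hu k - hv k + (2 * k + 1) * ih₀ - K * ih₁

lemma SolvesMomentRecurrence.exists_eq_add {F : Type*} [Field F] {c K : F} {u v w : ℕ → F}
    (hc : c ≠ 0) (hu : SolvesMomentRecurrence c K u) (hv : SolvesMomentRecurrence c K v)
    (hw : SolvesMomentRecurrence c K w)
    (hdet : v 0 * w 1 - v 1 * w 0 ≠ 0) : ∃ a b : F, ∀ k, u k = a * v k + b * w k := by
  obtain ⟨d, hd⟩ : ∃ d, (v 0 * w 1 - v 1 * w 0) * d = 1 := ⟨_, mul_inv_cancel₀ hdet⟩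
  refine ⟨(u 0 * w 1 - u 1 * w 0) * d, (v 0 * u 1 - v 1 * u 0) * d,
    congrFun (hu.ext hc (fun k => ?_) ?_ ?_)⟩
  · linear_combination (u 0 * w 1 - u 1 * w 0) * d * hv k + (v 0 * u 1 - v 1 * u 0) * d * hw k
  · linear_combination -u 0 * hd
  · linear_combination -u 1 * hd

end MomentRecurrence

/-! ### The Freud weight -/

section FreudWeight

variable {c : ℝ}

/-- The weight for which integration by parts is the Pearson equation. -/
noncomputable def freudWeight (c K t : ℝ) : ℝ := Real.exp (-(c / 4) * t ^ 4 - (K / 2) * t ^ 2)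

lemma freudWeight_pos (c K t : ℝ) : 0 < freudWeight c K t := Real.exp_pos _

@[fun_prop]
lemma continuous_freudWeight (c K : ℝ) : Continuous (freudWeight c K) := by
  unfold freudWeight; fun_prop

lemma freudWeight_neg (c K t : ℝ) : freudWeight c K (-t) = freudWeight c K t := by
  simp [freudWeight, Even.neg_pow (show Even 4 by decide)]

lemma hasDerivAt_freudWeight (c K t : ℝ) :
    HasDerivAt (freudWeight c K) (-(c * t ^ 3 + K * t) * freudWeight c K t) t := by
  have hexponent : HasDerivAt (fun t : ℝ => -(c / 4) * t ^ 4 - (K / 2) * t ^ 2)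
      (-(c * t ^ 3 + K * t)) t := by
    refine (((hasDerivAt_pow 4 t).const_mul (-(c / 4))).sub
      ((hasDerivAt_pow 2 t).const_mul (K / 2))).congr_deriv ?_
    push_cast
    ring
  exact hexponent.exp.congr_deriv (mul_comm _ _)

lemma freudWeight_sub (c K s t : ℝ) :
    freudWeight c (K - s) t = Real.exp (s / 2 * t ^ 2) * freudWeight c K t := by
  rw [freudWeight, freudWeight, ← Real.exp_add]
  ring_nf

lemma freudWeight_antitone (c t : ℝ) : Antitone fun K => freudWeight c K t := 
  fun K K' h => Real.exp_le_exp.2 (by gcongr)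

lemma freudWeight_le_gaussian (hc : 0 < c) (K t : ℝ) :
    freudWeight c K t ≤ Real.exp ((K / 2 - 1) ^ 2 / c) * Real.exp (-1 * t ^ 2) := by
  rw [freudWeight, ← Real.exp_add]
  have hsquare : (c / 4) * t ^ 4 + (K / 2 - 1) * t ^ 2 + (K / 2 - 1) ^ 2 / c
      = (c * t ^ 2 + 2 * (K / 2 - 1)) ^ 2 / (4 * c) := by field_simp; ring
  have hnonneg : 0 ≤ (c * t ^ 2 + 2 * (K / 2 - 1)) ^ 2 / (4 * c) := by positivity
  exact Real.exp_le_exp.2 (by linarith)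

lemma integrable_pow_mul_freudWeight (hc : 0 < c) (K : ℝ) (n : ℕ) :
    Integrable fun t : ℝ => t ^ n * freudWeight c K t := by
  have hgauss := (integrable_rpow_mul_exp_neg_mul_sq (b := 1) one_pos (s := (n : ℝ))
    (neg_one_lt_zero.trans_le n.cast_nonneg)).const_mul (Real.exp ((K / 2 - 1) ^ 2 / c))
  refine hgauss.mono (by fun_prop) (Eventually.of_forall fun t => ?_)
  simp only [Real.rpow_natCast, norm_mul, Real.norm_of_nonneg (freudWeight_pos c K t).le,
    Real.norm_of_nonneg (Real.exp_pos _).le]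
  rw [mul_left_comm]
  exact mul_le_mul_of_nonneg_left (freudWeight_le_gaussian hc K t) (norm_nonneg _)

lemma integrable_eval_mul_freudWeight (hc : 0 < c) (K : ℝ) (p : ℝ[X]) :
    Integrable fun t : ℝ => p.eval t * freudWeight c K t := by
  induction p using Polynomial.induction_on' with
  | add p q hp hq => simpa only [eval_add, add_mul] using! hp.add hq
  | monomial n a =>
    simpa only [eval_monomial, mul_assoc] using (integrable_pow_mul_freudWeight hc K n).const_mul a

/-- Integration of polynomials against the Freud weight, the functional whose recurrence
coefficients solve the difference equation. -/
noncomputable def freudFunctional (hc : 0 < c) (K : ℝ) : ℝ[X] →ₗ[ℝ] ℝ where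
  toFun p := ∫ t : ℝ, p.eval t * freudWeight c K t
  map_add' p q := by
    simp only [eval_add, add_mul]
    exact integral_add (integrable_eval_mul_freudWeight hc K p)
      (integrable_eval_mul_freudWeight hc K q)
  map_smul' a p := by
    simp only [eval_smul, smul_eq_mul, mul_assoc, integral_const_mul, RingHom.id_apply]

lemma freudFunctional_apply (hc : 0 < c) (K : ℝ) (p : ℝ[X]) :
    freudFunctional hc K p = ∫ t : ℝ, p.eval t * freudWeight c K t :=
  rfl

lemma satisfiesPearson_freudFunctional (hc : 0 < c) (K : ℝ) :
    SatisfiesPearson c K (freudFunctional hc K) := by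
  intro p
  rw [← sub_eq_zero, ← map_sub, freudFunctional_apply]
  refine integral_eq_zero_of_hasDerivAt_of_integrable (fun t => ?_)
    (integrable_eval_mul_freudWeight hc K _) (integrable_eval_mul_freudWeight hc K p)
  refine ((p.hasDerivAt t).mul (hasDerivAt_freudWeight c K t)).congr_deriv ?_
  simp only [eval_sub, eval_add, eval_mul, eval_pow, eval_C, eval_X]
  ring

lemma vanishesOnOdd_freudFunctional (hc : 0 < c) (K : ℝ) :
    VanishesOnOdd (freudFunctional hc K) := by
  intro p hp
  have heval (t : ℝ) : p.eval (-t) = -p.eval t := by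
    simpa using congrArg (eval t) hp
  have hreflect := integral_neg_eq_self (fun t : ℝ => p.eval t * freudWeight c K t) volume
  simp only [heval, freudWeight_neg, neg_mul, integral_neg] at hreflect
  exact self_eq_neg.1 hreflect.symm

lemma freudFunctional_pos (hc : 0 < c) (K : ℝ) {p : ℝ[X]} (hp : ∀ t, 0 ≤ p.eval t) (hp0 : p ≠ 0) :
    0 < freudFunctional hc K p := by
  obtain ⟨t, ht⟩ : ∃ t, p.eval t ≠ 0 := by
    by_contra! hzero
    exact hp0 (Polynomial.funext (by simpa using hzero))
  exact integral_pos_of_integrable_nonneg_nonzero (x := t) (by fun_prop)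
    (integrable_eval_mul_freudWeight hc K p)
    (fun s => mul_nonneg (hp s) (freudWeight_pos c K s).le)
    (mul_ne_zero ht (freudWeight_pos c K t).ne')

lemma freudFunctional_antitone (hc : 0 < c) {p : ℝ[X]} (hp : ∀ t, 0 ≤ p.eval t) :
    Antitone fun K => freudFunctional hc K p := fun K K' h =>
  integral_mono (integrable_eval_mul_freudWeight hc K' p) (integrable_eval_mul_freudWeight hc K p)
    fun t => mul_le_mul_of_nonneg_left (freudWeight_antitone c t h) (hp t)

lemma mul_freudFunctional_le (hc : 0 < c) (K s : ℝ) {p : ℝ[X]} (hp : ∀ t, 0 ≤ p.eval t) :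
    s * (freudFunctional hc K (X ^ 2 * p) / 2) ≤ freudFunctional hc (K - s) p := by
  calc s * (freudFunctional hc K (X ^ 2 * p) / 2)
      = freudFunctional hc K (C (s / 2) * (X ^ 2 * p)) := by
        rw [apply_C_mul]; ring
    _ ≤ freudFunctional hc (K - s) p := by
        refine integral_mono (integrable_eval_mul_freudWeight hc K _)
          (integrable_eval_mul_freudWeight hc (K - s) p) fun t => ?_
        have hexp : s / 2 * t ^ 2 ≤ Real.exp (s / 2 * t ^ 2) :=
          (le_add_of_nonneg_right zero_le_one).trans (Real.add_one_le_exp _)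
        have := mul_le_mul_of_nonneg_right hexp (mul_nonneg (hp t) (freudWeight_pos c K t).le)
        simp only [freudWeight_sub, eval_mul, eval_C, eval_pow, eval_X]
        linarith

lemma tendsto_freudFunctional_atTop (hc : 0 < c) (K : ℝ) {p : ℝ[X]} (hp : ∀ t, 0 ≤ p.eval t)
    (hp0 : p ≠ 0) : Tendsto (fun s => freudFunctional hc (K - s) p) atTop atTop := by
  have hpos : 0 < freudFunctional hc K (X ^ 2 * p) :=
    freudFunctional_pos hc K
      (fun t => by simpa using mul_nonneg (sq_nonneg t) (hp t)) (mul_ne_zero (by simp) hp0)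
  exact tendsto_atTop_mono (fun s => mul_freudFunctional_le hc K s hp)
    (tendsto_id.atTop_mul_const (half_pos hpos))

end FreudWeight

/-! ### Determinacy of the even moments -/

lemma eval_trunc_exp (N : ℕ) (y : ℝ) :
    (PowerSeries.trunc N (PowerSeries.exp ℝ)).eval y
      = ∑ i ∈ Finset.range N, y ^ i / i.factorial := by
  rw [← eval₂_id, PowerSeries.eval₂_trunc_eq_sum_range]
  simp [PowerSeries.coeff_exp, div_eq_inv_mul]

lemma tendsto_eval_trunc_exp (y : ℝ) :
    Tendsto (fun N => (PowerSeries.trunc N (PowerSeries.exp ℝ)).eval y) atTop (𝓝 (Real.exp y)) := by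
  simp only [eval_trunc_exp, Real.exp_eq_exp_ℝ]
  exact (NormedSpace.expSeries_div_hasSum_exp y).tendsto_sum_nat

lemma abs_eval_trunc_exp_le (N : ℕ) (y : ℝ) :
    |(PowerSeries.trunc N (PowerSeries.exp ℝ)).eval y| ≤ Real.exp |y| := by
  rw [eval_trunc_exp]
  calc |∑ i ∈ Finset.range N, y ^ i / (i.factorial : ℝ)|
      ≤ ∑ i ∈ Finset.range N, |y| ^ i / (i.factorial : ℝ) := by
        simpa [abs_div, abs_pow] using Finset.abs_sum_le_sum_abs
          (fun i => y ^ i / (i.factorial : ℝ)) (Finset.range N)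
    _ ≤ Real.exp |y| := Real.sum_le_exp_of_nonneg (abs_nonneg y) N

theorem tendsto_freudFunctional_mul_trunc_exp_sq {c : ℝ} (hc : 0 < c) (K s : ℝ) (p : ℝ[X]) :
    Tendsto (fun N => freudFunctional hc K
        (p * ((PowerSeries.trunc N (PowerSeries.exp ℝ)).comp (C s * X ^ 2)) ^ 2))
      atTop (𝓝 (freudFunctional hc (K - 4 * s) p)) := by
  have hshift (s t : ℝ) :
      freudWeight c (K - 4 * s) t = Real.exp (s * t ^ 2) ^ 2 * freudWeight c K t := by
    rw [freudWeight_sub, ← Real.exp_nat_mul]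
    ring_nf
  refine tendsto_integral_of_dominated_convergence
    (fun t => |p.eval t * freudWeight c (K - 4 * |s|) t|) (fun N => by fun_prop)
    (integrable_eval_mul_freudWeight hc _ p).abs (fun N => ae_of_all _ fun t => ?_)
    (ae_of_all _ fun t => ?_)
  · have habs : |s * t ^ 2| = |s| * t ^ 2 := by rw [abs_mul, abs_sq]
    have hbound := habs ▸ abs_eval_trunc_exp_le N (s * t ^ 2)
    simp only [eval_mul, eval_pow, eval_comp, eval_C, eval_X, Real.norm_eq_abs, hshift, mul_assoc,
      abs_mul, abs_pow, Real.abs_exp]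
    gcongr
  · simp only [eval_mul, eval_pow, eval_comp, eval_C, eval_X, hshift, mul_assoc]
    exact (((tendsto_eval_trunc_exp _).pow 2).mul_const _).const_mul _

section Determinacy

variable {c K : ℝ} {L : ℝ[X] →ₗ[ℝ] ℝ}

-- The term with `b` integrates `r (t ^ 2)` against the weight over the imaginary axis.
lemma SatisfiesPearson.exists_apply_comp_X_sq_eq_add (hc : 0 < c) (hL : SatisfiesPearson c K L) :
    ∃ a b : ℝ, ∀ r : ℝ[X], L (r.comp (X ^ 2)) = a * freudFunctional hc K (r.comp (X ^ 2))
      + b * freudFunctional hc (-K) (r.comp (-X ^ 2)) := by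
  have hmoment (K : ℝ) (k : ℕ) : 0 < freudFunctional hc K (X ^ (2 * k)) :=
    freudFunctional_pos hc K (fun t => by simpa using (even_two_mul k).pow_nonneg t) (by simp)
  have hdet : freudFunctional hc K (X ^ (2 * 0))
        * ((-1) ^ 1 * freudFunctional hc (-K) (X ^ (2 * 1)))
      - freudFunctional hc K (X ^ (2 * 1)) * ((-1) ^ 0 * freudFunctional hc (-K) (X ^ (2 * 0)))
      < 0 := by
    linarith [mul_pos (hmoment K 0) (hmoment (-K) 1), mul_pos (hmoment K 1) (hmoment (-K) 0)]
  obtain ⟨a, b, hab⟩ := hL.solvesMomentRecurrence.exists_eq_add hc.ne'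
    (satisfiesPearson_freudFunctional hc K).solvesMomentRecurrence
    (satisfiesPearson_freudFunctional hc (-K)).solvesMomentRecurrence.neg_one_pow_mul hdet.ne
  refine ⟨a, b, fun r => ?_⟩
  induction r using Polynomial.induction_on' with
  | add p q hp hq => simp only [add_comp, map_add, hp, hq]; ring
  | monomial n α =>
    have hneg : (-X ^ 2 : ℝ[X]) ^ n = C ((-1) ^ n) * X ^ (2 * n) := by
      rw [neg_pow, ← pow_mul, map_pow, map_neg, map_one]
    simp only [monomial_comp, ← pow_mul, hneg, apply_C_mul, hab]
    ring

lemma nonneg_of_forall_freudFunctional_add_nonneg (hc : 0 < c) (K : ℝ) {p : ℝ[X]}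
    (hp : ∀ t, 0 ≤ p.eval t) (hp0 : p ≠ 0) {a b : ℝ}
    (h : ∀ s, 0 ≤ a * freudFunctional hc (K + s) p + b * freudFunctional hc (-K - s) p) :
    0 ≤ b := by
  by_contra! hb
  obtain ⟨s, hs, hlt⟩ := ((eventually_ge_atTop 0).and
    (((tendsto_freudFunctional_atTop hc (-K) hp hp0).const_mul_atTop_of_neg hb).eventually_lt_atBot
      (-(|a| * freudFunctional hc K p)))).exists
  have hdecay : freudFunctional hc (K + s) p ≤ freudFunctional hc K p :=
    freudFunctional_antitone hc hp (le_add_of_nonneg_right hs)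
  have hbounded : a * freudFunctional hc (K + s) p ≤ |a| * freudFunctional hc K p :=
    mul_le_mul (le_abs_self a) hdecay (freudFunctional_pos hc _ hp hp0).le (abs_nonneg a)
  linarith [h s]

lemma nonneg_of_apply_comp_X_sq_eq_add (hc : 0 < c) (hpos : ∀ p, 0 ≤ L (p * p)) {a b : ℝ}
    (hab : ∀ r : ℝ[X], L (r.comp (X ^ 2)) = a * freudFunctional hc K (r.comp (X ^ 2))
      + b * freudFunctional hc (-K) (r.comp (-X ^ 2))) (e : ℕ) (q : ℝ[X]) :
    0 ≤ a * freudFunctional hc K (X ^ (2 * e) * q.comp (X ^ 2) ^ 2)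
      + (-1) ^ e * b * freudFunctional hc (-K) (X ^ (2 * e) * q.comp (-X ^ 2) ^ 2) := by
  have hreal : (X ^ e * q ^ 2).comp (X ^ 2) = X ^ (2 * e) * q.comp (X ^ 2) ^ 2 := by
    simp only [mul_comp, pow_comp, X_comp, ← pow_mul]
  have himag : (X ^ e * q ^ 2).comp (-X ^ 2)
      = C ((-1) ^ e) * (X ^ (2 * e) * q.comp (-X ^ 2) ^ 2) := by
    rw [mul_comp, pow_comp, pow_comp, X_comp, neg_pow, ← pow_mul, map_pow, map_neg, map_one,
      mul_assoc]
  calc 0 ≤ L ((X ^ e * q.comp (X ^ 2)) * (X ^ e * q.comp (X ^ 2))) := hpos _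
    _ = L ((X ^ e * q ^ 2).comp (X ^ 2)) := by rw [hreal]; ring_nf
    _ = _ := by rw [hab, hreal, himag, apply_C_mul]; ring

lemma nonneg_of_apply_comp_X_sq_eq_add_shift (hc : 0 < c) (hpos : ∀ p, 0 ≤ L (p * p)) {a b : ℝ}
    (hab : ∀ r : ℝ[X], L (r.comp (X ^ 2)) = a * freudFunctional hc K (r.comp (X ^ 2))
      + b * freudFunctional hc (-K) (r.comp (-X ^ 2))) (e : ℕ) (s : ℝ) :
    0 ≤ a * freudFunctional hc (K + 4 * s) (X ^ (2 * e))
      + (-1) ^ e * b * freudFunctional hc (-K - 4 * s) (X ^ (2 * e)) := by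
  have hlim := ((tendsto_freudFunctional_mul_trunc_exp_sq hc K (-s) (X ^ (2 * e))).const_mul a).add
    ((tendsto_freudFunctional_mul_trunc_exp_sq hc (-K) s (X ^ (2 * e))).const_mul ((-1) ^ e * b))
  rw [mul_neg, sub_neg_eq_add] at hlim
  refine ge_of_tendsto' hlim fun N => ?_
  have hreal : (C (-s) * X).comp (X ^ 2 : ℝ[X]) = C (-s) * X ^ 2 := by
    rw [mul_comp, C_comp, X_comp]
  have himag : (C (-s) * X).comp (-X ^ 2 : ℝ[X]) = C s * X ^ 2 := by
    rw [mul_comp, C_comp, X_comp, map_neg, neg_mul_neg]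
  have hsquare := nonneg_of_apply_comp_X_sq_eq_add hc hpos hab e
    ((PowerSeries.trunc N (PowerSeries.exp ℝ)).comp (C (-s) * X))
  rwa [comp_assoc, comp_assoc, hreal, himag] at hsquare

theorem SatisfiesPearson.exists_apply_comp_X_sq_eq (hc : 0 < c) (hL : SatisfiesPearson c K L)
    (hpos : ∀ p, 0 ≤ L (p * p)) :
    ∃ a : ℝ, ∀ r : ℝ[X], L (r.comp (X ^ 2)) = a * freudFunctional hc K (r.comp (X ^ 2)) := by
  obtain ⟨a, b, hab⟩ := hL.exists_apply_comp_X_sq_eq_add hc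
  have hsign (e : ℕ) : 0 ≤ (-1) ^ e * b :=
    nonneg_of_forall_freudFunctional_add_nonneg hc K (p := X ^ (2 * e)) (a := a)
      (fun t => by simpa using (even_two_mul e).pow_nonneg t) (by simp) fun s => by
        simpa [mul_div_cancel₀] using nonneg_of_apply_comp_X_sq_eq_add_shift hc hpos hab e (s / 4)
  have hb : b = 0 := le_antisymm (by simpa using hsign 1) (by simpa using hsign 0)
  exact ⟨a, fun r => by rw [hab, hb, zero_mul, add_zero]⟩

theorem SolvesFreud.apply_one_eq_div (hc : 0 < c) {x : ℕ → ℝ} (hx : x 0 = 0)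
    (hsol : SolvesFreud c K x) (hpos : ∀ n : ℕ, 1 ≤ n → 0 < x n) :
    x 1 = freudFunctional hc K (X ^ 2) / freudFunctional hc K 1 := by
  obtain ⟨L, hone, hsq, hLpos, hL⟩ := exists_satisfiesPearson_of_solvesFreud hx hsol hpos
  obtain ⟨a, ha⟩ := hL.exists_apply_comp_X_sq_eq hc hLpos
  have h₀ : 1 = a * freudFunctional hc K 1 := by simpa [hone] using ha 1
  have h₁ : x 1 = a * freudFunctional hc K (X ^ 2) := by simpa [hsq] using ha X
  have hne : freudFunctional hc K 1 ≠ 0 := right_ne_zero_of_mul (h₀ ▸ one_ne_zero)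
  rw [eq_div_iff hne, h₁, mul_right_comm, ← h₀, one_mul]

end Determinacy

/-- For `c > 0` and `K ∈ ℝ`, the difference equation
`n = c·xₙ (xₙ₊₁ + xₙ + xₙ₋₁) + K·xₙ` with `x₀ = 0` has exactly one positive solution,
and this solution satisfies
`x₁ = (∫ x² exp(−(c/4)x⁴ − (K/2)x²) dx) / (∫ exp(−(c/4)x⁴ − (K/2)x²) dx)`. -/
theorem stmt1 (c K : ℝ) (hc : 0 < c) :
    (∃! x : ℕ → ℝ,
      x 0 = 0 ∧
      (∀ n : ℕ, 1 ≤ n →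
        (n : ℝ) = c * (x n * (x (n + 1) + x n + x (n - 1))) + K * x n) ∧
      (∀ n : ℕ, 1 ≤ n → 0 < x n)) ∧
    (∀ x : ℕ → ℝ,
      x 0 = 0 →
      (∀ n : ℕ, 1 ≤ n →
        (n : ℝ) = c * (x n * (x (n + 1) + x n + x (n - 1))) + K * x n) →
      (∀ n : ℕ, 1 ≤ n → 0 < x n) →
      x 1 = (∫ t : ℝ, t ^ 2 * Real.exp (-(c / 4) * t ^ 4 - (K / 2) * t ^ 2)) /
            (∫ t : ℝ, Real.exp (-(c / 4) * t ^ 4 - (K / 2) * t ^ 2))) := by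
  obtain ⟨x, hx, hsol, hpos⟩ := exists_pos_solvesFreud (vanishesOnOdd_freudFunctional hc K)
    (fun p hp => freudFunctional_pos hc K (fun t => by simpa using mul_self_nonneg (p.eval t))
      (mul_ne_zero hp hp)) (satisfiesPearson_freudFunctional hc K)
  refine ⟨⟨x, ⟨hx, hsol, hpos⟩, fun y ⟨hy, hysol, hypos⟩ => ?_⟩, fun y hy hysol hypos => ?_⟩
  · refine SolvesFreud.ext hc.ne' hysol hsol (fun n hn => (hypos n hn).ne') (hy.trans hx.symm) ?_
    rw [SolvesFreud.apply_one_eq_div hc hy hysol hypos,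
      SolvesFreud.apply_one_eq_div hc hx hsol hpos]
  · simpa [freudFunctional_apply, freudWeight] using SolvesFreud.apply_one_eq_div hc hy hysol hypos
end

section
/- Suppose ℓ_n > 0, σ_{n,0} > 0, σ_{n,1} ≥ 0, σ_{n,-1} ≥ 0, κ_n ≥ 0 for all n ≥ 1, and that max(σ_{n,-1}, σ_{n,1}) ≤ σ_{n,0} for all n ≥ 1, that liminf_{n→∞} ℓ_n/(n² σ_{n,0}) = 0, and that x_0 ∈ ℝ satisfies σ_{1,-1} x_0 ≥ −κ_1 (in particular x_0 = 0 is allowed). Then there exists a unique x_1 > 0 such that the sequence (x_n)_{n≥0} determined by x_0, x_1 and the equation ℓ_n = x_n (σ_{n,1} x_{n+1} + σ_{n,0} x_n + σ_{n,-1} x_{n-1}) + κ_n x_n for all n ≥ 1 satisfies x_n > 0 for all n ≥ 1. -/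
/-!
Given its neighbours, `xₙ` is the positive root of a quadratic whose linear coefficient increases
with them. Hence the positive solutions are the fixed points of an antitone map `T`, and the
monotone map `T ∘ T` has a greatest fixed point `u`. Then `v = T u` is also a fixed point of
`T ∘ T`, so `v ≤ u`, and every fixed point of `T` lies between `v` and `u`. It remains to see that
`u = v`. The difference `w = u - v` vanishes at `0` and satisfies `2 wₙ ≤ wₙ₊₁ + wₙ₋₁`, so it grows
at least linearly unless it is zero; but `wₙ² ≤ uₙ² ≤ ℓₙ / σₙ₀`, which is `o(n²)` along a
subsequence.
-/

open Filter Function Set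

section FixedPoints

variable {α : Type*} [ConditionallyCompleteLattice α]

lemma exists_isGreatest_fixedPoints_of_monotone {G : α → α} (hG : Monotone G)
    (hne : {x | x ≤ G x}.Nonempty) (hbdd : BddAbove {x | x ≤ G x}) :
    ∃ u, IsGreatest (fixedPoints G) u := by
  set u := sSup {x | x ≤ G x}
  have hle : u ≤ G u := csSup_le hne fun x hx => le_trans hx (hG (le_csSup hbdd hx))
  have hge : G u ≤ u := le_csSup hbdd (hG hle)
  exact ⟨u, hge.antisymm hle, fun x hx => le_csSup hbdd (IsFixedPt.eq hx).ge⟩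

lemma existsUnique_isFixedPt_of_antitone {T : α → α} (hT : Antitone T)
    (hbdd : BddBelow (range T)) (hcycle : ∀ u, T u ≤ u → T (T u) = u → T u = u) :
    ∃! x, IsFixedPt T x := by
  obtain ⟨b, hb⟩ := hbdd
  have hbT : ∀ x, b ≤ T x := fun x => hb (mem_range_self x)
  obtain ⟨u, hu, hmax⟩ := exists_isGreatest_fixedPoints_of_monotone (hT.comp hT)
    ⟨b, hbT (T b)⟩ ⟨T b, fun x hx => le_trans hx (hT (hbT x))⟩
  have hTu : T u = u := hcycle u (hmax (congrArg T hu)) hu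
  refine ⟨u, hTu, fun x hx => ?_⟩
  have hxu : x ≤ u := hmax (hx.comp hx)
  refine hxu.antisymm ?_
  calc u = T u := hTu.symm
    _ ≤ T x := hT hxu
    _ = x := hx

end FixedPoints

section DiscreteConvexity

section OrderedRing

variable {R : Type*} [CommRing R] [LinearOrder R] [IsStrictOrderedRing R] {w : ℕ → R}

lemma succ_mul_le_mul_succ_of_convex (h0 : w 0 ≤ 0)
    (hconv : ∀ n, 2 * w (n + 1) ≤ w (n + 2) + w n) (n : ℕ) :
    ((n : R) + 1) * w n ≤ n * w (n + 1) := by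
  induction n with
  | zero => simpa using h0
  | succ k ih =>
    have hk := mul_le_mul_of_nonneg_left (hconv k) (by positivity : (0 : R) ≤ (k : R) + 1)
    push_cast
    linarith

lemma natCast_mul_le_natCast_mul_of_convex (h0 : w 0 ≤ 0)
    (hconv : ∀ n, 2 * w (n + 1) ≤ w (n + 2) + w n) {m n : ℕ} (hmn : m ≤ n) :
    (n : R) * w m ≤ m * w n := by
  rcases m.eq_zero_or_pos with rfl | hm
  · simpa using mul_nonpos_of_nonneg_of_nonpos n.cast_nonneg h0
  induction n, hmn using Nat.le_induction with
  | base => rfl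
  | succ k hk ih =>
    refine le_of_mul_le_mul_left ?_ (Nat.cast_pos.mpr (hm.trans_le hk) : (0 : R) < k)
    calc (k : R) * (((k + 1 : ℕ) : R) * w m) = (k + 1) * (k * w m) := by push_cast; ring
      _ ≤ (k + 1) * (m * w k) := by gcongr
      _ = m * ((k + 1) * w k) := by ring
      _ ≤ m * (k * w (k + 1)) :=
        mul_le_mul_of_nonneg_left (succ_mul_le_mul_succ_of_convex h0 hconv k) m.cast_nonneg
      _ = k * (m * w (k + 1)) := by ring

end OrderedRing

lemma eq_zero_of_convex_of_liminf {w : ℕ → ℝ} (h0 : w 0 ≤ 0) (hw : ∀ n, 0 ≤ w n)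
    (hconv : ∀ n, 2 * w (n + 1) ≤ w (n + 2) + w n)
    (hlim : liminf (fun n : ℕ => (((w n / n) ^ 2 : ℝ) : EReal)) atTop ≤ 0) (m : ℕ) :
    w m = 0 := by
  rcases m.eq_zero_or_pos with rfl | hm
  · exact h0.antisymm (hw 0)
  have hmR : (0 : ℝ) < m := Nat.cast_pos.mpr hm
  have hlower : (((w m / m) ^ 2 : ℝ) : EReal) ≤
      liminf (fun n : ℕ => (((w n / n) ^ 2 : ℝ) : EReal)) atTop := by
    refine le_liminf_of_le (by isBoundedDefault) ?_
    filter_upwards [eventually_ge_atTop m] with n hmn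
    have hnR : (0 : ℝ) < n := Nat.cast_pos.mpr (hm.trans_le hmn)
    have hslope : w m / m ≤ w n / n := by
      rw [div_le_div_iff₀ hmR hnR, mul_comm (w m), mul_comm (w n)]
      exact natCast_mul_le_natCast_mul_of_convex h0 hconv hmn
    exact EReal.coe_le_coe (pow_le_pow_left₀ (div_nonneg (hw m) hmR.le) hslope 2)
  have hsq : (w m / m) ^ 2 ≤ 0 := by exact_mod_cast hlower.trans hlim
  simpa [hm.ne'] using hsq.antisymm (sq_nonneg _)

end DiscreteConvexity

section Quadratic

section OrderedRing

variable {R : Type*} [CommRing R] [LinearOrder R] [IsStrictOrderedRing R] {l s t u c d : R}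

lemma mul_sq_le_of_eq_mul_add (ht : 0 ≤ t) (hc : 0 ≤ c) (h : l = t * (s * t + c)) :
    s * t ^ 2 ≤ l := by
  linarith [mul_nonneg ht hc]

lemma le_of_eq_mul_add_of_le (hl : 0 < l) (hs : 0 ≤ s) (ht : 0 < t)
    (htc : l = t * (s * t + c)) (hud : l = u * (s * u + d)) (hcd : c ≤ d) : u ≤ t := by
  by_contra! htu
  have hpos : 0 < s * t + c := pos_of_mul_pos_right (htc ▸ hl) ht.le
  have hlt : l < l := calc
    l = t * (s * t + c) := htc
    _ < u * (s * t + c) := by gcongr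
    _ ≤ u * (s * u + d) := by
      have hu : 0 ≤ u := (ht.trans htu).le
      gcongr
    _ = l := hud.symm
  exact hlt.false

/- Subtracting the equations divided by `u` and by `t` gives
`l (t - u) / (t u) = d - c - s (t - u)`, and `l ≥ s t² ≥ s t u`: this is where the `2` comes
from. -/
lemma two_mul_mul_sub_le_sub (hs : 0 ≤ s) (hu : 0 < u) (hut : u ≤ t) (hc : 0 ≤ c)
    (htc : l = t * (s * t + c)) (hud : l = u * (s * u + d)) :
    2 * (s * (t - u)) ≤ d - c := by
  have ht : 0 < t := hu.trans_le hut
  have hl : s * (t * u) ≤ l := calc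
    s * (t * u) ≤ s * t ^ 2 := by rw [sq]; gcongr
    _ ≤ l := mul_sq_le_of_eq_mul_add ht.le hc htc
  refine le_of_mul_le_mul_left ?_ (mul_pos ht hu)
  have hdiff : l * (t - u) = t * u * (d - c - s * (t - u)) := by
    linear_combination t * hud - u * htc
  linarith [mul_le_mul_of_nonneg_right hl (sub_nonneg.mpr hut)]

end OrderedRing

lemma sub_div_sq_le {l s t u c : ℝ} (hs : 0 < s) (hu : 0 ≤ u) (hut : u ≤ t) (hc : 0 ≤ c)
    (htc : l = t * (s * t + c)) (r : ℝ) : ((t - u) / r) ^ 2 ≤ l / (r ^ 2 * s) := by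
  have hsq : (t - u) ^ 2 ≤ t ^ 2 := pow_le_pow_left₀ (sub_nonneg.mpr hut) (sub_le_self _ hu) 2
  have hl : s * t ^ 2 ≤ l := mul_sq_le_of_eq_mul_add (hu.trans hut) hc htc
  rw [div_pow, ← div_div, div_right_comm]
  gcongr
  rw [le_div_iff₀' hs]
  exact (mul_le_mul_of_nonneg_left hsq hs.le).trans hl

/-- The positive root `t` of `l = t (s t + c)` for positive `l` and `s`. The quadratic formula is
rationalised, so that for `c ≥ 0` no cancellation occurs in it. -/
noncomputable def posRoot (l s c : ℝ) : ℝ := 2 * l / (c + √(c ^ 2 + 4 * s * l))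

variable {l s t c : ℝ}

lemma add_sqrt_sq_add_pos (hl : 0 < l) : 0 < c + √(c ^ 2 + l) := by
  have habs : |c| < √(c ^ 2 + l) := Real.lt_sqrt_of_sq_lt (by rw [sq_abs]; linarith)
  linarith [neg_abs_le c]

lemma posRoot_pos (hl : 0 < l) (hs : 0 < s) : 0 < posRoot l s c :=
  div_pos (by positivity) (add_sqrt_sq_add_pos (by positivity))

lemma eq_posRoot_mul_add (hl : 0 < l) (hs : 0 < s) :
    l = posRoot l s c * (s * posRoot l s c + c) := by
  have hsq : √(c ^ 2 + 4 * s * l) ^ 2 = c ^ 2 + 4 * s * l := Real.sq_sqrt (by positivity)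
  have hpos : 0 < c + √(c ^ 2 + 4 * s * l) := add_sqrt_sq_add_pos (by positivity)
  rw [posRoot]
  generalize √(c ^ 2 + 4 * s * l) = q at *
  field_simp
  linear_combination hsq

lemma posRoot_antitone (hl : 0 < l) (hs : 0 < s) : Antitone (posRoot l s) := fun _ _ hcd =>
  le_of_eq_mul_add_of_le hl hs.le (posRoot_pos hl hs) (eq_posRoot_mul_add hl hs)
    (eq_posRoot_mul_add hl hs) hcd

lemma posRoot_eq_iff (hl : 0 < l) (hs : 0 < s) :
    posRoot l s c = t ↔ 0 < t ∧ l = t * (s * t + c) := by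
  constructor
  · rintro rfl
    exact ⟨posRoot_pos hl hs, eq_posRoot_mul_add hl hs⟩
  · rintro ⟨ht, htc⟩
    exact le_antisymm
      (le_of_eq_mul_add_of_le hl hs.le ht htc (eq_posRoot_mul_add hl hs) le_rfl)
      (le_of_eq_mul_add_of_le hl hs.le (posRoot_pos hl hs) (eq_posRoot_mul_add hl hs) htc le_rfl)

end Quadratic

section Recurrence

variable {ℓ σ1 σ0 σm1 κ : ℕ → ℝ} {x₀ : ℝ} {u v x y : ℕ → ℝ}

/-- The coefficient `σₙ₁ xₙ₊₁ + σₙ₋₁ xₙ₋₁ + κₙ` of `xₙ` when the recurrence is read as a quadratic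
equation in `xₙ`. It is meant for `n ≥ 1` only, since `0 - 1 = 0` in `ℕ`. -/
def linearCoeff (σ1 σm1 κ x : ℕ → ℝ) (n : ℕ) : ℝ :=
  σ1 n * x (n + 1) + σm1 n * x (n - 1) + κ n

/-- The map `T` whose fixed points are the positive solutions starting at `x₀`: it solves the
recurrence at each `n ≥ 1` for its `n`-th term, with the neighbouring terms taken from `x`. -/
noncomputable def rootMap (ℓ σ1 σ0 σm1 κ : ℕ → ℝ) (x₀ : ℝ) (x : ℕ → ℝ) : ℕ → ℝ
  | 0 => x₀
  | n + 1 => posRoot (ℓ (n + 1)) (σ0 (n + 1)) (linearCoeff σ1 σm1 κ x (n + 1))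

lemma linearCoeff_mono {n : ℕ} (hσ1 : 0 ≤ σ1 n) (hσm1 : 0 ≤ σm1 n) :
    Monotone fun x => linearCoeff σ1 σm1 κ x n := by
  intro x y hxy
  simp only [linearCoeff]
  gcongr <;> apply hxy

lemma linearCoeff_nonneg (hσ1 : ∀ n, 1 ≤ n → 0 ≤ σ1 n) (hσm1 : ∀ n, 1 ≤ n → 0 ≤ σm1 n)
    (hκ : ∀ n, 1 ≤ n → 0 ≤ κ n) (hx : ∀ n, 1 ≤ n → 0 ≤ x n) (hx₀ : 0 ≤ σm1 1 * x 0 + κ 1)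
    {n : ℕ} (hn : 1 ≤ n) : 0 ≤ linearCoeff σ1 σm1 κ x n := by
  have hnext : 0 ≤ σ1 n * x (n + 1) := mul_nonneg (hσ1 n hn) (hx _ n.succ_pos)
  suffices hprev : 0 ≤ σm1 n * x (n - 1) + κ n by
    rw [linearCoeff, add_assoc]
    exact add_nonneg hnext hprev
  obtain rfl | h1n := hn.eq_or_lt
  · exact hx₀
  · exact add_nonneg (mul_nonneg (hσm1 n hn) (hx _ (Nat.le_sub_one_of_lt h1n))) (hκ n hn)

lemma linearCoeff_sub_le {n : ℕ} {s : ℝ} (hσ1 : σ1 n ≤ s) (hσm1 : σm1 n ≤ s) (hvu : v ≤ u) :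
    linearCoeff σ1 σm1 κ u n - linearCoeff σ1 σm1 κ v n ≤
      s * (u (n + 1) - v (n + 1) + (u (n - 1) - v (n - 1))) := calc
  linearCoeff σ1 σm1 κ u n - linearCoeff σ1 σm1 κ v n
    = σ1 n * (u (n + 1) - v (n + 1)) + σm1 n * (u (n - 1) - v (n - 1)) := by
      simp only [linearCoeff]; ring
  _ ≤ s * (u (n + 1) - v (n + 1)) + s * (u (n - 1) - v (n - 1)) := by
      gcongr <;> exact sub_nonneg.mpr (hvu _)
  _ = s * (u (n + 1) - v (n + 1) + (u (n - 1) - v (n - 1))) := by ring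

lemma rootMap_eq_iff (hℓ : ∀ n, 1 ≤ n → 0 < ℓ n) (hσ0 : ∀ n, 1 ≤ n → 0 < σ0 n) :
    rootMap ℓ σ1 σ0 σm1 κ x₀ x = y ↔ y 0 = x₀ ∧ ∀ n, 1 ≤ n →
      0 < y n ∧ ℓ n = y n * (σ0 n * y n + linearCoeff σ1 σm1 κ x n) := by
  constructor
  · rintro rfl
    refine ⟨rfl, fun n hn => ?_⟩
    obtain ⟨k, rfl⟩ := Nat.exists_eq_add_of_le' hn
    exact (posRoot_eq_iff (hℓ _ hn) (hσ0 _ hn)).mp rfl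
  · rintro ⟨h0, hy⟩
    funext n
    cases n with
    | zero => exact h0.symm
    | succ k => exact (posRoot_eq_iff (hℓ _ k.succ_pos) (hσ0 _ k.succ_pos)).mpr (hy _ k.succ_pos)

lemma isFixedPt_rootMap_iff (hℓ : ∀ n, 1 ≤ n → 0 < ℓ n) (hσ0 : ∀ n, 1 ≤ n → 0 < σ0 n) :
    IsFixedPt (rootMap ℓ σ1 σ0 σm1 κ x₀) x ↔ x 0 = x₀ ∧
      (∀ n, 1 ≤ n →
        ℓ n = x n * (σ1 n * x (n + 1) + σ0 n * x n + σm1 n * x (n - 1)) + κ n * x n) ∧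
      ∀ n, 1 ≤ n → 0 < x n := by
  have hquad : ∀ n, x n * (σ0 n * x n + linearCoeff σ1 σm1 κ x n) =
      x n * (σ1 n * x (n + 1) + σ0 n * x n + σm1 n * x (n - 1)) + κ n * x n := fun n => by
    rw [linearCoeff]; ring
  rw [IsFixedPt, rootMap_eq_iff hℓ hσ0]
  simp only [hquad, forall_and, and_comm]

lemma rootMap_antitone (hℓ : ∀ n, 1 ≤ n → 0 < ℓ n) (hσ0 : ∀ n, 1 ≤ n → 0 < σ0 n)
    (hσ1 : ∀ n, 1 ≤ n → 0 ≤ σ1 n) (hσm1 : ∀ n, 1 ≤ n → 0 ≤ σm1 n) :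
    Antitone (rootMap ℓ σ1 σ0 σm1 κ x₀) := by
  rintro x y hxy (_ | k)
  · exact le_rfl
  · have hk : 1 ≤ k + 1 := k.succ_pos
    exact posRoot_antitone (hℓ _ hk) (hσ0 _ hk) (linearCoeff_mono (hσ1 _ hk) (hσm1 _ hk) hxy)

lemma bddBelow_range_rootMap (hℓ : ∀ n, 1 ≤ n → 0 < ℓ n) (hσ0 : ∀ n, 1 ≤ n → 0 < σ0 n) :
    BddBelow (range (rootMap ℓ σ1 σ0 σm1 κ x₀)) := by
  refine ⟨fun _ => min x₀ 0, ?_⟩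
  rintro _ ⟨x, rfl⟩ (_ | k)
  · exact min_le_left _ _
  · exact (min_le_right _ _).trans (posRoot_pos (hℓ _ k.succ_pos) (hσ0 _ k.succ_pos)).le

lemma rootMap_eq_self_of_rootMap_rootMap_eq (hℓ : ∀ n, 1 ≤ n → 0 < ℓ n)
    (hσ0 : ∀ n, 1 ≤ n → 0 < σ0 n) (hσ1 : ∀ n, 1 ≤ n → 0 ≤ σ1 n)
    (hσm1 : ∀ n, 1 ≤ n → 0 ≤ σm1 n) (hκ : ∀ n, 1 ≤ n → 0 ≤ κ n)
    (hmax : ∀ n, 1 ≤ n → max (σm1 n) (σ1 n) ≤ σ0 n)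
    (hliminf : liminf (fun n : ℕ => ((ℓ n / ((n : ℝ) ^ 2 * σ0 n) : ℝ) : EReal)) atTop ≤ 0)
    (hx₀ : 0 ≤ σm1 1 * x₀ + κ 1) (hle : rootMap ℓ σ1 σ0 σm1 κ x₀ u ≤ u)
    (hcycle : rootMap ℓ σ1 σ0 σm1 κ x₀ (rootMap ℓ σ1 σ0 σm1 κ x₀ u) = u) :
    rootMap ℓ σ1 σ0 σm1 κ x₀ u = u := by
  set v := rootMap ℓ σ1 σ0 σm1 κ x₀ u with hTu
  obtain ⟨hu0, hu⟩ := (rootMap_eq_iff hℓ hσ0).mp hcycle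
  obtain ⟨hv0, hv⟩ := (rootMap_eq_iff hℓ hσ0).mp hTu.symm
  have hcoeff : ∀ {n}, 1 ≤ n → 0 ≤ linearCoeff σ1 σm1 κ v n :=
    linearCoeff_nonneg hσ1 hσm1 hκ (fun n hn => (hv n hn).1.le) (hv0 ▸ hx₀)
  have hconv : ∀ n, 2 * (u (n + 1) - v (n + 1)) ≤ u (n + 2) - v (n + 2) + (u n - v n) := by
    intro n
    have hn : 1 ≤ n + 1 := n.succ_pos
    refine le_of_mul_le_mul_left ?_ (hσ0 _ hn)
    calc σ0 (n + 1) * (2 * (u (n + 1) - v (n + 1)))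
      _ = 2 * (σ0 (n + 1) * (u (n + 1) - v (n + 1))) := by ring
      _ ≤ linearCoeff σ1 σm1 κ u (n + 1) - linearCoeff σ1 σm1 κ v (n + 1) :=
        two_mul_mul_sub_le_sub (hσ0 _ hn).le (hv _ hn).1 (hle _) (hcoeff hn) (hu _ hn).2 (hv _ hn).2
      _ ≤ σ0 (n + 1) * (u (n + 2) - v (n + 2) + (u n - v n)) :=
        linearCoeff_sub_le (le_of_max_le_right (hmax _ hn)) (le_of_max_le_left (hmax _ hn)) hle
  have hlim : liminf (fun n : ℕ => ((((u n - v n) / n) ^ 2 : ℝ) : EReal)) atTop ≤ 0 :=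
    (liminf_le_liminf ((eventually_ge_atTop 1).mono fun n hn => EReal.coe_le_coe
      (sub_div_sq_le (hσ0 n hn) (hv n hn).1.le (hle n) (hcoeff hn) (hu n hn).2 n))).trans hliminf
  funext n
  exact (sub_eq_zero.mp (eq_zero_of_convex_of_liminf (w := u - v) (by simp [hu0, hv0])
    (fun n => sub_nonneg.mpr (hle n)) hconv hlim n)).symm

end Recurrence

/-- Corollary (existence and uniqueness): if `max(σₙ₋₁, σₙ₁) ≤ σₙ₀`, `κₙ ≥ 0`,
`liminf ℓₙ/(n² σₙ₀) = 0`, and `σ₁,₋₁ x₀ ≥ −κ₁`, then there exists a unique `x₁ > 0`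
such that the sequence determined by `x₀`, `x₁` and the equation
`ℓₙ = xₙ (σₙ₁ xₙ₊₁ + σₙ₀ xₙ + σₙ₋₁ xₙ₋₁) + κₙ xₙ` is positive. -/
theorem stmt6 (ℓ σ1 σ0 σm1 κ : ℕ → ℝ) (x₀ : ℝ)
    (hℓ : ∀ n : ℕ, 1 ≤ n → 0 < ℓ n)
    (hσ0 : ∀ n : ℕ, 1 ≤ n → 0 < σ0 n)
    (hσ1 : ∀ n : ℕ, 1 ≤ n → 0 ≤ σ1 n)
    (hσm1 : ∀ n : ℕ, 1 ≤ n → 0 ≤ σm1 n)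
    (hκ : ∀ n : ℕ, 1 ≤ n → 0 ≤ κ n)
    (hmax : ∀ n : ℕ, 1 ≤ n → max (σm1 n) (σ1 n) ≤ σ0 n)
    (hliminf :
      Filter.liminf (fun n : ℕ => ((ℓ n / ((n : ℝ) ^ 2 * σ0 n) : ℝ) : EReal))
        Filter.atTop = 0)
    (hx₀ : σm1 1 * x₀ ≥ -κ 1) :
    ∃! x₁ : ℝ, 0 < x₁ ∧
      ∃ x : ℕ → ℝ, x 0 = x₀ ∧ x 1 = x₁ ∧
        (∀ n : ℕ, 1 ≤ n →
          ℓ n = x n * (σ1 n * x (n + 1) + σ0 n * x n + σm1 n * x (n - 1)) + κ n * x n) ∧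
        (∀ n : ℕ, 1 ≤ n → 0 < x n) := by
  obtain ⟨x, hx, hunique⟩ : ∃! x, Function.IsFixedPt (rootMap ℓ σ1 σ0 σm1 κ x₀) x :=
    existsUnique_isFixedPt_of_antitone (rootMap_antitone hℓ hσ0 hσ1 hσm1)
      (bddBelow_range_rootMap hℓ hσ0) fun _ =>
        rootMap_eq_self_of_rootMap_rootMap_eq hℓ hσ0 hσ1 hσm1 hκ hmax hliminf.le
          (neg_le_iff_add_nonneg.mp hx₀)
  obtain ⟨hx0, heq, hpos⟩ := (isFixedPt_rootMap_iff hℓ hσ0).mp hx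
  refine ⟨x 1, ⟨hpos 1 le_rfl, x, hx0, rfl, heq, hpos⟩, ?_⟩
  rintro _ ⟨-, y, hy0, rfl, hyeq, hypos⟩
  rw [hunique y ((isFixedPt_rootMap_iff hℓ hσ0).mpr ⟨hy0, hyeq, hypos⟩)]
end

section
/- Suppose ℓ_n > 0, σ_{n,0} > 0, σ_{n,1} ≥ 0, σ_{n,-1} ≥ 0, κ_n ∈ ℝ for all n ≥ 1, and the coefficients satisfy limsup_{n→∞} σ_{n,1} < ∞, liminf_{n→∞} σ_{n,0} > 0, limsup_{n→∞} σ_{n,-1} < ∞, 0 < liminf_{n→∞} √(ℓ_{n+1}/ℓ_n) ≤ limsup_{n→∞} √(ℓ_{n+1}/ℓ_n) < ∞, and limsup_{n→∞} |κ_n|/√ℓ_n < ∞. If a real sequence (x_n)_{n≥0} satisfies ℓ_n = x_n (σ_{n,1} x_{n+1} + σ_{n,0} x_n + σ_{n,-1} x_{n-1}) + κ_n x_n for all n ≥ 1, then liminf_{n→∞} x_n/√ℓ_n > −∞ if and only if limsup_{n→∞} x_n/√ℓ_n < ∞. -/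
/-!
In terms of `yₙ = xₙ / √ℓₙ` the recurrence, read as the inequality `≥`, becomes
`yₙ (σₙ₀ yₙ + wₙ) ≤ 1` with `wₙ = aₙ yₙ₊₁ + bₙ yₙ₋₁ + kₙ`, where `aₙ = σₙ₁ √(ℓₙ₊₁ / ℓₙ) ≥ 0`,
`bₙ = σₙ₋₁ √(ℓₙ₋₁ / ℓₙ) ≥ 0` and `kₙ = κₙ / √ℓₙ` are bounded. If `y` is bounded below, then so is
`w`; at an index with `yₙ > 1` the inequality gives `σₙ₀ yₙ + wₙ ≤ 1`, which bounds `yₙ` above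
because `σₙ₀` is bounded away from `0`. Changing the signs of `y` and `k` preserves the inequality
and gives the other implication.
-/

open Filter

section Filter

variable {ι : Type*} {l : Filter ι}

lemma limsup_coe_lt_top_iff {u : ι → ℝ} :
    limsup (fun i => (u i : EReal)) l < ⊤ ↔ IsBoundedUnder (· ≤ ·) l u := by
  constructor
  · intro h
    obtain ⟨C, hC, -⟩ := EReal.lt_iff_exists_real_btwn.1 h
    exact isBoundedUnder_of_eventually_le
      ((eventually_lt_of_limsup_lt hC).mono fun i hi => (EReal.coe_lt_coe_iff.1 hi).le)
  · rintro ⟨C, hC⟩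
    have hC' : ∀ᶠ i in l, (u i : EReal) ≤ C :=
      (eventually_map.1 hC).mono fun i hi => EReal.coe_le_coe_iff.2 hi
    exact (limsup_le_of_le (by isBoundedDefault) hC').trans_lt (EReal.coe_lt_top C)

lemma bot_lt_liminf_coe_iff {u : ι → ℝ} :
    ⊥ < liminf (fun i => (u i : EReal)) l ↔ IsBoundedUnder (· ≥ ·) l u := by
  have hneg : limsup (fun i => ((-u i : ℝ) : EReal)) l = -liminf (fun i => (u i : EReal)) l := by
    simpa only [Pi.neg_def, EReal.coe_neg] using
      EReal.limsup_neg (v := fun i => (u i : EReal)) (f := l)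
  rw [← isBoundedUnder_le_neg, ← limsup_coe_lt_top_iff, hneg, EReal.neg_lt_comm, EReal.neg_top]

lemma exists_pos_eventually_le_of_zero_lt_liminf_coe {u : ι → ℝ}
    (h : 0 < liminf (fun i => (u i : EReal)) l) : ∃ c > 0, ∀ᶠ i in l, c ≤ u i := by
  obtain ⟨c, hc₀, hc⟩ := EReal.lt_iff_exists_real_btwn.1 h
  exact ⟨c, EReal.coe_pos.1 hc₀,
    (eventually_lt_of_lt_liminf hc).mono fun i hi => (EReal.coe_lt_coe_iff.1 hi).le⟩

lemma isBoundedUnder_le_inv_of_zero_lt_liminf_coe {u : ι → ℝ}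
    (h : 0 < liminf (fun i => (u i : EReal)) l) :
    IsBoundedUnder (· ≤ ·) l fun i => (u i)⁻¹ := by
  obtain ⟨c, hc₀, hc⟩ := exists_pos_eventually_le_of_zero_lt_liminf_coe h
  exact isBoundedUnder_of_eventually_le (hc.mono fun i hi => inv_anti₀ hc₀ hi)

lemma isBoundedUnder_ge_mul_of_nonneg {R : Type*} [Ring R] [LinearOrder R] [IsOrderedRing R]
    {a u : ι → R} (ha₀ : ∀ᶠ i in l, 0 ≤ a i) (ha : IsBoundedUnder (· ≤ ·) l a)
    (hu : IsBoundedUnder (· ≥ ·) l u) : IsBoundedUnder (· ≥ ·) l fun i => a i * u i := by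
  obtain ⟨A, hA⟩ := ha.eventually_le
  obtain ⟨m, hm⟩ := hu.eventually_ge
  refine isBoundedUnder_of_eventually_ge (a := A * min m 0) ?_
  filter_upwards [ha₀, hA, hm] with i ha₀ hA hm
  calc A * min m 0 ≤ a i * min m 0 := mul_le_mul_of_nonpos_right hA (min_le_right m 0)
    _ ≤ a i * u i := mul_le_mul_of_nonneg_left ((min_le_left m 0).trans hm) ha₀

end Filter

section NormalizedRecurrence

lemma le_max_of_mul_le_one {s₀ s y w m : ℝ} (hs₀ : 0 < s₀) (hs : s₀ ≤ s) (hw : m ≤ w)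
    (h : y * (s * y + w) ≤ 1) : y ≤ max 1 ((1 - m) / s₀) := by
  refine le_max_iff.2 ((le_or_gt y 1).imp_right fun hy => ?_)
  have hy₀ : 0 < y := one_pos.trans hy
  have hfactor : s * y + w ≤ 1 := by
    by_contra! hlt
    exact h.not_gt (one_lt_mul_of_lt_of_le hy hlt.le)
  have hsy : s₀ * y ≤ s * y := mul_le_mul_of_nonneg_right hs hy₀.le
  rw [le_div_iff₀' hs₀]
  linarith

variable {y a s b k : ℕ → ℝ} {s₀ : ℝ}

lemma isBoundedUnder_le_of_recurrence_le_one (ha₀ : ∀ᶠ n in atTop, 0 ≤ a n)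
    (ha : IsBoundedUnder (· ≤ ·) atTop a) (hs₀ : 0 < s₀) (hs : ∀ᶠ n in atTop, s₀ ≤ s n)
    (hb₀ : ∀ᶠ n in atTop, 0 ≤ b n) (hb : IsBoundedUnder (· ≤ ·) atTop b)
    (hk : IsBoundedUnder (· ≥ ·) atTop k)
    (hrec : ∀ᶠ n in atTop,
      y n * (a n * y (n + 1) + s n * y n + b n * y (n - 1)) + k n * y n ≤ 1)
    (hy : IsBoundedUnder (· ≥ ·) atTop y) : IsBoundedUnder (· ≤ ·) atTop y := by
  have hnext : IsBoundedUnder (· ≥ ·) atTop fun n => a n * y (n + 1) :=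
    isBoundedUnder_ge_mul_of_nonneg ha₀ ha ((tendsto_add_atTop_nat 1).isBoundedUnder_comp hy)
  have hprev : IsBoundedUnder (· ≥ ·) atTop fun n => b n * y (n - 1) :=
    isBoundedUnder_ge_mul_of_nonneg hb₀ hb ((tendsto_sub_atTop_nat 1).isBoundedUnder_comp hy)
  obtain ⟨m, hm⟩ :=
    (isBoundedUnder_ge_add (isBoundedUnder_ge_add hnext hprev) hk).eventually_ge
  refine isBoundedUnder_of_eventually_le (a := max 1 ((1 - m) / s₀)) ?_
  filter_upwards [hs, hm, hrec] with n hs hm hrec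
  exact le_max_of_mul_le_one hs₀ hs hm (le_of_eq_of_le (by simp only [Pi.add_apply]; ring) hrec)

lemma isBoundedUnder_ge_iff_le_of_recurrence_le_one (ha₀ : ∀ᶠ n in atTop, 0 ≤ a n)
    (ha : IsBoundedUnder (· ≤ ·) atTop a) (hs₀ : 0 < s₀) (hs : ∀ᶠ n in atTop, s₀ ≤ s n)
    (hb₀ : ∀ᶠ n in atTop, 0 ≤ b n) (hb : IsBoundedUnder (· ≤ ·) atTop b)
    (hk : IsBoundedUnder (· ≤ ·) atTop fun n => |k n|)
    (hrec : ∀ᶠ n in atTop,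
      y n * (a n * y (n + 1) + s n * y n + b n * y (n - 1)) + k n * y n ≤ 1) :
    IsBoundedUnder (· ≥ ·) atTop y ↔ IsBoundedUnder (· ≤ ·) atTop y := by
  obtain ⟨hk_le, hk_ge⟩ := isBoundedUnder_le_abs.1 hk
  refine ⟨isBoundedUnder_le_of_recurrence_le_one ha₀ ha hs₀ hs hb₀ hb hk_ge hrec, fun hy => ?_⟩
  have hrec_neg : ∀ᶠ n in atTop,
      -y n * (a n * -y (n + 1) + s n * -y n + b n * -y (n - 1)) + -k n * -y n ≤ 1 :=
    hrec.mono fun n hn => le_of_eq_of_le (by ring) hn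
  exact isBoundedUnder_le_neg.1 <| isBoundedUnder_le_of_recurrence_le_one ha₀ ha hs₀ hs hb₀ hb
    (isBoundedUnder_ge_neg.2 hk_le) hrec_neg (isBoundedUnder_ge_neg.2 hy)

end NormalizedRecurrence

lemma recurrence_div_sqrt_le_one {L L₁ L₂ x x₁ x₂ a s b k : ℝ} (hL : 0 < L) (hL₁ : 0 < L₁)
    (hL₂ : 0 < L₂) (h : x * (a * x₁ + s * x + b * x₂) + k * x ≤ L) :
    x / √L * (a * √(L₁ / L) * (x₁ / √L₁) + s * (x / √L) + b * √(L₂ / L) * (x₂ / √L₂)) +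
      k / √L * (x / √L) ≤ 1 := by
  have hr : √L ≠ 0 := (Real.sqrt_pos.2 hL).ne'
  have hr₁ : √L₁ ≠ 0 := (Real.sqrt_pos.2 hL₁).ne'
  have hr₂ : √L₂ ≠ 0 := (Real.sqrt_pos.2 hL₂).ne'
  calc
    _ = (x * (a * x₁ + s * x + b * x₂) + k * x) / √L ^ 2 := by
      rw [Real.sqrt_div hL₁.le, Real.sqrt_div hL₂.le]
      field_simp
    _ ≤ 1 := by rwa [Real.sq_sqrt hL.le, div_le_one hL]

lemma isBoundedUnder_le_sqrt_pred_div {ℓ : ℕ → ℝ}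
    (h : 0 < liminf (fun n => (√(ℓ (n + 1) / ℓ n) : EReal)) atTop) :
    IsBoundedUnder (· ≤ ·) atTop fun n => √(ℓ (n - 1) / ℓ n) := by
  have hinv := (tendsto_sub_atTop_nat 1).isBoundedUnder_comp
    (isBoundedUnder_le_inv_of_zero_lt_liminf_coe h)
  refine hinv.mono_le ((eventually_ge_atTop 1).mono fun n hn => ?_)
  simp only [Function.comp_apply, Nat.sub_add_cancel hn, ← Real.sqrt_inv, inv_div, le_refl]

theorem stmt8_general (ℓ σ1 σ0 σm1 κ : ℕ → ℝ) (x : ℕ → ℝ)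
    (hℓ : ∀ᶠ n in atTop, 0 < ℓ n)
    (hσ1 : ∀ᶠ n in atTop, 0 ≤ σ1 n)
    (hσm1 : ∀ᶠ n in atTop, 0 ≤ σm1 n)
    (hlimsupσ1 : limsup (fun n => (σ1 n : EReal)) atTop < ⊤)
    (hliminfσ0 : 0 < liminf (fun n => (σ0 n : EReal)) atTop)
    (hlimsupσm1 : limsup (fun n => (σm1 n : EReal)) atTop < ⊤)
    (hliminfℓ : 0 < liminf (fun n => (√(ℓ (n + 1) / ℓ n) : EReal)) atTop)
    (hlimsupℓ : limsup (fun n => (√(ℓ (n + 1) / ℓ n) : EReal)) atTop < ⊤)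
    (hlimsupκ : limsup (fun n => ((|κ n| / √(ℓ n) : ℝ) : EReal)) atTop < ⊤)
    (hle : ∀ᶠ n in atTop,
      x n * (σ1 n * x (n + 1) + σ0 n * x n + σm1 n * x (n - 1)) + κ n * x n ≤ ℓ n) :
    ⊥ < liminf (fun n => ((x n / √(ℓ n) : ℝ) : EReal)) atTop ↔
      limsup (fun n => ((x n / √(ℓ n) : ℝ) : EReal)) atTop < ⊤ := by
  rw [limsup_coe_lt_top_iff] at hlimsupσ1 hlimsupσm1 hlimsupℓ hlimsupκ
  rw [bot_lt_liminf_coe_iff, limsup_coe_lt_top_iff]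
  obtain ⟨s₀, hs₀, hs⟩ := exists_pos_eventually_le_of_zero_lt_liminf_coe hliminfσ0
  have hnext : IsBoundedUnder (· ≤ ·) atTop fun n => σ1 n * √(ℓ (n + 1) / ℓ n) :=
    isBoundedUnder_le_mul_of_nonneg hσ1.frequently hlimsupσ1
      (.of_forall fun _ => Real.sqrt_nonneg _) hlimsupℓ
  have hprev : IsBoundedUnder (· ≤ ·) atTop fun n => σm1 n * √(ℓ (n - 1) / ℓ n) :=
    isBoundedUnder_le_mul_of_nonneg hσm1.frequently hlimsupσm1
      (.of_forall fun _ => Real.sqrt_nonneg _) (isBoundedUnder_le_sqrt_pred_div hliminfℓ)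
  have hκ : IsBoundedUnder (· ≤ ·) atTop fun n => |κ n / √(ℓ n)| := by
    simpa only [abs_div, abs_of_nonneg (Real.sqrt_nonneg _)] using hlimsupκ
  refine isBoundedUnder_ge_iff_le_of_recurrence_le_one
    (hσ1.mono fun n hn => mul_nonneg hn (Real.sqrt_nonneg _)) hnext hs₀ hs
    (hσm1.mono fun n hn => mul_nonneg hn (Real.sqrt_nonneg _)) hprev hκ ?_
  filter_upwards [hℓ, (tendsto_add_atTop_nat 1).eventually hℓ,
    (tendsto_sub_atTop_nat 1).eventually hℓ, hle] with n hℓ hℓ_next hℓ_prev hle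
  exact recurrence_div_sqrt_le_one hℓ hℓ_next hℓ_prev hle

/-- Corollary of the boundedness theorem: under the stated coefficient conditions, any
solution of `ℓₙ = xₙ (σₙ₁ xₙ₊₁ + σₙ₀ xₙ + σₙ₋₁ xₙ₋₁) + κₙ xₙ` satisfies
`liminf xₙ/√ℓₙ > −∞ ⟺ limsup xₙ/√ℓₙ < ∞`. -/
theorem stmt8 (ℓ σ1 σ0 σm1 κ : ℕ → ℝ) (x : ℕ → ℝ)
    (hℓ : ∀ n : ℕ, 1 ≤ n → 0 < ℓ n)
    (hσ0 : ∀ n : ℕ, 1 ≤ n → 0 < σ0 n)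
    (hσ1 : ∀ n : ℕ, 1 ≤ n → 0 ≤ σ1 n)
    (hσm1 : ∀ n : ℕ, 1 ≤ n → 0 ≤ σm1 n)
    (hlimsupσ1 : Filter.limsup (fun n : ℕ => ((σ1 n : ℝ) : EReal)) Filter.atTop < ⊤)
    (hliminfσ0 : 0 < Filter.liminf (fun n : ℕ => ((σ0 n : ℝ) : EReal)) Filter.atTop)
    (hlimsupσm1 : Filter.limsup (fun n : ℕ => ((σm1 n : ℝ) : EReal)) Filter.atTop < ⊤)
    (hliminfℓ :
      0 < Filter.liminf
        (fun n : ℕ => ((Real.sqrt (ℓ (n + 1) / ℓ n) : ℝ) : EReal)) Filter.atTop)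
    (hlimsupℓ :
      Filter.limsup
        (fun n : ℕ => ((Real.sqrt (ℓ (n + 1) / ℓ n) : ℝ) : EReal)) Filter.atTop < ⊤)
    (hlimsupκ :
      Filter.limsup (fun n : ℕ => ((|κ n| / Real.sqrt (ℓ n) : ℝ) : EReal))
        Filter.atTop < ⊤)
    (heq : ∀ n : ℕ, 1 ≤ n →
      ℓ n = x n * (σ1 n * x (n + 1) + σ0 n * x n + σm1 n * x (n - 1)) + κ n * x n) :
    (⊥ < Filter.liminf (fun n : ℕ => ((x n / Real.sqrt (ℓ n) : ℝ) : EReal)) Filter.atTop ↔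
      Filter.limsup (fun n : ℕ => ((x n / Real.sqrt (ℓ n) : ℝ) : EReal)) Filter.atTop < ⊤) :=
  stmt8_general ℓ σ1 σ0 σm1 κ x (eventually_atTop.2 ⟨1, hℓ⟩) (eventually_atTop.2 ⟨1, hσ1⟩)
    (eventually_atTop.2 ⟨1, hσm1⟩) hlimsupσ1 hliminfσ0 hlimsupσm1 hliminfℓ hlimsupℓ hlimsupκ
    (eventually_atTop.2 ⟨1, fun n hn => (heq n hn).ge⟩)
end
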